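/- Let ĥ : ℝ → ℝ be continuous with ĥ(t) = 0 for every t ∉ [1/2, 2], and suppose ĥ(t)² + ĥ(2t)² = 1 for every t ∈ [1/2, 1]. Define h : ℝ → ℝ by h(t) = 1 if t < 1 and h(t) = ĥ(t)² if t ≥ 1. Then for every real t ≥ 1 and every natural number J, h(t/2^J) = Σ_{j=0}^{J} ĥ(t/2^j)². -/

import Mathlib

/-- A continuous function vanishing on `(a, ∞)` also vanishes at `a`. -/
theorem Continuous.eq_zero_of_forall_gt {f : ℝ → ℝ} (hf : Continuous f) {a : ℝ}
    (hzero : ∀ t, a < t → f t = 0) : f a = 0 := by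
  have hmem : a ∈ closure (Set.Ioi a) := by simp
  exact closure_minimal (t := f ⁻¹' {0}) (fun t ht => hzero t ht)
    (isClosed_singleton.preimage hf) hmem

/-- The two-scale relation between a needlet filter `g` and its associated filter. -/
theorem needlet_two_scale {g : ℝ → ℝ} (hcont : Continuous g)
    (hsupp : ∀ t : ℝ, t ∉ Set.Icc (1/2 : ℝ) 2 → g t = 0)
    (hpart : ∀ t ∈ Set.Icc (1/2 : ℝ) 1, (g t)^2 + (g (2*t))^2 = 1) (s : ℝ) :
    (if s < 1 then 1 else (g s)^2) = (if 2*s < 1 then 1 else (g (2*s))^2) + (g s)^2 := by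
  have htwo : g 2 = 0 := hcont.eq_zero_of_forall_gt fun t ht => hsupp t fun hmem => by
    linarith [hmem.2]
  rcases lt_or_ge s (1/2) with hs | hs
  · have hzero : g s = 0 := hsupp s fun hmem => by linarith [hmem.1]
    rw [if_pos (by linarith), if_pos (by linarith), hzero]
    norm_num
  rw [if_neg (show ¬ 2*s < 1 by linarith)]
  rcases lt_or_ge s 1 with hs1 | hs1
  · rw [if_pos hs1]
    linarith [hpart s ⟨hs, hs1.le⟩]
  · have hzero : g (2*s) = 0 := by
      rcases hs1.eq_or_lt with rfl | hlt
      · simpa using htwo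
      · exact hsupp _ fun hmem => by linarith [hmem.2]
    rw [if_neg hs1.not_gt, hzero]
    ring

/-- For a needlet filter `ĥ` (continuous, supported in `[1/2,2]`, with
`ĥ(t)² + ĥ(2t)² = 1` on `[1/2,1]`) and the associated filter `h` (`h = 1` on `(-∞,1)`,
`h = ĥ²` on `[1,∞)`), one has the telescoping identity
`h(t/2^J) = Σ_{j=0}^{J} ĥ(t/2^j)²` for every `t ≥ 1` and `J ∈ ℕ`. -/
theorem stmt13 (needletFilter : ℝ → ℝ) (hcont : Continuous needletFilter)
    (hsupp : ∀ t : ℝ, t ∉ Set.Icc (1/2 : ℝ) 2 → needletFilter t = 0)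
    (hpart : ∀ t ∈ Set.Icc (1/2 : ℝ) 1,
      (needletFilter t)^2 + (needletFilter (2*t))^2 = 1)
    (h : ℝ → ℝ)
    (hdef : ∀ t : ℝ, h t = if t < 1 then 1 else (needletFilter t)^2)
    (t : ℝ) (ht : 1 ≤ t) (J : ℕ) :
    h (t / 2^J) = ∑ j ∈ Finset.range (J+1), (needletFilter (t / 2^j))^2 := by
  induction J with
  | zero => simp [hdef, ht.not_gt]
  | succ J ih =>
    have hscale : 2 * (t / 2^(J+1)) = t / 2^J := by
      field_simp
      ring
    rw [Finset.sum_range_succ, ← ih, hdef, hdef, ← hscale]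
    exact needlet_two_scale hcont hsupp hpart _
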